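/- arXiv:2203.04418 — 3 statements merged into one kernel-verified Lean document; each statement's English description precedes it below -/
import Mathlib

section
/- Let X be a finite set and let d : A(X) × A(X) → [0,∞) be a semimetric on the set A(X) of acyclic orders on X that satisfies Axioms 1 and 3. Then d(≿_{ab}, ≿_{ab}^+) = d(≿_{cb}, ≿_{cb}^+) for every pairwise distinct a, b, c ∈ X. -/
open Classical Finset symmDiff

section PrefDefs

variable {X : Type*}

/-- The asymmetric part `R^>` of a binary relation `R`. -/
def asymPart (R : X → X → Prop) : X → X → Prop := fun x y => R x y ∧ ¬ R y x

/-- `R` is acyclic: there is no cycle of pairwise distinct elements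
`z_0 R^> z_1 R^> ⋯ R^> z_k R^> z_0`. -/
def AcyclicRel (R : X → X → Prop) : Prop :=
  ¬ ∃ (k : ℕ) (z : Fin (k + 1) → X), Function.Injective z ∧
      ∀ i : Fin (k + 1), asymPart R (z i) (z (i + 1))

/-- An acyclic order: a reflexive acyclic binary relation. -/
def AcyclicOrd (R : X → X → Prop) : Prop := Reflexive R ∧ AcyclicRel R

/-- `M(S,R)`: the set of `R`-maximal elements of `S`. -/
noncomputable def MaxSet [DecidableEq X] (S : Finset X) (R : X → X → Prop) : Finset X :=
  S.filter fun x => ∀ y ∈ S, ¬ asymPart R y x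

/-- The μ-top-difference semimetric, where the measure μ is given by the
weights `w x = μ {x}`. -/
noncomputable def Dmu [Fintype X] [DecidableEq X] (w : X → ℝ) (R R' : X → X → Prop) : ℝ :=
  ∑ S : Finset X, ∑ x ∈ symmDiff (MaxSet S R) (MaxSet S R'), w x

/-- The top-difference semimetric `D`. -/
noncomputable def Dtop [Fintype X] [DecidableEq X] (R R' : X → X → Prop) : ℕ :=
  ∑ S : Finset X, (symmDiff (MaxSet S R) (MaxSet S R')).card

/-- `≿ ⊕ (a,b)`: if `b ∼ a` delete `(b,a)`, if `a, b` are `≿`-incomparable add `(a,b)`. -/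
def oplusR (R : X → X → Prop) (a b : X) : X → X → Prop :=
  fun x y => (R x y ∧ ¬(R b a ∧ x = b ∧ y = a)) ∨ (¬ R b a ∧ x = a ∧ y = b)

/-- `≿ ⊖ (a,b)`: delete the pair `(a,b)`. -/
def ominusR (R : X → X → Prop) (a b : X) : X → X → Prop :=
  fun x y => R x y ∧ ¬(x = a ∧ y = b)

/-- `≿ → ≿_0 ↠ ⊵` : `R0` is a one-step perturbation of `R` toward `R'`. -/
def OneStep (R R0 R' : X → X → Prop) : Prop :=
  AcyclicOrd R0 ∧
  ((∃ a b, asymPart R a b ∧ ¬ asymPart R' a b ∧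
      (∀ x, asymPart R' x b → asymPart R x b) ∧ R0 = ominusR R a b) ∨
   (∃ a b, ¬ asymPart R a b ∧ ¬ asymPart R b a ∧ asymPart R' a b ∧ R0 = oplusR R a b))

/-- `Q` is in-between `R` and `R'` : `Q` is an n-step perturbation of `R` toward `R'`
for some positive integer n. -/
def InBetween (R R' Q : X → X → Prop) : Prop :=
  ∃ (n : ℕ) (c : Fin (n + 1) → (X → X → Prop)),
    OneStep R (c 0) R' ∧
    (∀ i : Fin n, OneStep (c i.castSucc) (c i.succ) R') ∧
    c (Fin.last n) = Q

/-- `N(b,≿)`: the number of `x ≠ b` with not `x ≻ b`. -/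
noncomputable def Nnum [Fintype X] (R : X → X → Prop) (b : X) : ℕ :=
  (Finset.univ.filter fun x => x ≠ b ∧ ¬ asymPart R x b).card

/-- `≿_{ab}`: the partial order whose asymmetric part is `(X \ {a,b}) × {a,b}`. -/
def RabRel (a b : X) : X → X → Prop :=
  fun x y => x = y ∨ ((x ≠ a ∧ x ≠ b) ∧ (y = a ∨ y = b))

/-- `≿_{ab}^+`: as `≿_{ab}` but with `a` ranked strictly above `b`. -/
def RabPlusRel (a b : X) : X → X → Prop :=
  fun x y => RabRel a b x y ∨ (x = a ∧ y = b)

/-- `d` is a semimetric on the set of acyclic orders on `X`. -/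
def IsSemimetricOn (d : (X → X → Prop) → (X → X → Prop) → ℝ) : Prop :=
  (∀ R R', AcyclicOrd R → AcyclicOrd R' → 0 ≤ d R R') ∧
  (∀ R, AcyclicOrd R → d R R = 0) ∧
  (∀ R R', AcyclicOrd R → AcyclicOrd R' → d R R' = d R' R) ∧
  (∀ R R' R'', AcyclicOrd R → AcyclicOrd R' → AcyclicOrd R'' →
    d R R'' ≤ d R R' + d R' R'')

/-- Axiom 1. -/
def Axiom1 (d : (X → X → Prop) → (X → X → Prop) → ℝ) : Prop :=
  ∀ R R0 R' : X → X → Prop, AcyclicOrd R → AcyclicOrd R' →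
    InBetween R R' R0 → d R R' = d R R0 + d R0 R'

/-- Axiom 2. -/
def Axiom2 (d : (X → X → Prop) → (X → X → Prop) → ℝ) : Prop :=
  ∀ a b : X, a ≠ b → d (RabRel a b) (RabPlusRel a b) = 1

/-- Axiom 3. -/
def Axiom3 [Fintype X] (d : (X → X → Prop) → (X → X → Prop) → ℝ) : Prop :=
  (∀ (R : X → X → Prop) (a b : X), AcyclicOrd R → a ≠ b →
      ¬ asymPart R a b → ¬ asymPart R b a → AcyclicOrd (oplusR R a b) →
      d R (oplusR R a b) = (2 : ℝ) ^ (Nnum R b - 1) * d (RabRel a b) (RabPlusRel a b)) ∧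
  (∀ (R : X → X → Prop) (a b : X), AcyclicOrd R → asymPart R a b →
      d R (ominusR R a b) = (2 : ℝ) ^ (Nnum R b) * d (RabRel a b) (RabPlusRel a b))

/-- Axiom 4. -/
def Axiom4 (d : (X → X → Prop) → (X → X → Prop) → ℝ) : Prop :=
  ∀ R R' : X → X → Prop, AcyclicOrd R → AcyclicOrd R' →
    (∀ x y, asymPart R x y ↔ asymPart R' x y) → d R R' = 0

end PrefDefs

/-!
Start from an acyclic order in which neither `a` nor `c` is comparable to `b`, and add the pairs
`(a, b)` and `(c, b)` one at a time. Let `u` and `v` be the weights that Axiom 3 gives to these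
pairs. Each addition puts one more element above `b` and so halves the power of two multiplying
the next weight. By Axiom 1 the total cost does not depend on the order of the two additions,
hence `2 u + v = 2 v + u` up to a power of two.
-/

section AcyclicOrders

variable {X : Type*} {R R' : X → X → Prop} {a b : X}

theorem asymPart_oplusR_iff (hab : a ≠ b) (hba : ¬ asymPart R b a) (x y : X) :
    asymPart (oplusR R a b) x y ↔ asymPart R x y ∨ x = a ∧ y = b := by
  grind [asymPart, oplusR]

theorem oplusR_comm {a' b' : X} (h : s(a, b) ≠ s(a', b')) :
    oplusR (oplusR R a b) a' b' = oplusR (oplusR R a' b') a b := by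
  rw [ne_eq, Sym2.eq_iff] at h
  funext x y
  grind [oplusR]

theorem AcyclicRel.of_asymPart_imp (hR' : AcyclicRel R')
    (h : ∀ x y, asymPart R x y → asymPart R' x y) : AcyclicRel R :=
  fun ⟨k, z, hz, hcycle⟩ => hR' ⟨k, z, hz, fun i => h _ _ (hcycle i)⟩

theorem AcyclicOrd.of_oplusR (hab : a ≠ b) (hba : ¬ asymPart R b a)
    (h : AcyclicOrd (oplusR R a b)) : AcyclicOrd R where
  left x := by
    obtain hx | ⟨-, hxa, hxb⟩ := h.1 x
    · exact hx.1
    · exact absurd (hxa.symm.trans hxb) hab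
  right := h.2.of_asymPart_imp fun x y hxy => (asymPart_oplusR_iff hab hba x y).2 (.inl hxy)

theorem acyclicRel_of_asymPart_imp_eq (h : ∀ x y, asymPart R x y → y = b) : AcyclicRel R := by
  rintro ⟨k, z, -, hcycle⟩
  have hz : ∀ i, z (i + 1) = b := fun i => h _ _ (hcycle i)
  have hbb : asymPart R b b := by simpa only [hz] using hcycle (0 + 1)
  exact hbb.2 hbb.1

theorem Nnum_eq_Nnum_oplusR_add_one [Fintype X] (hab : a ≠ b) (hnab : ¬ asymPart R a b)
    (hnba : ¬ asymPart R b a) : Nnum R b = Nnum (oplusR R a b) b + 1 := by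
  rw [Nnum, Nnum, ← card_insert_of_notMem (a := a)]
  · congr 1
    ext x
    grind [asymPart_oplusR_iff]
  · simp [asymPart_oplusR_iff hab hnba]

theorem InBetween.of_oneStep {R₀ : X → X → Prop} (h : OneStep R R₀ R') : InBetween R R' R₀ :=
  ⟨0, fun _ => R₀, h, fun i => i.elim0, rfl⟩

end AcyclicOrders

section Axioms

variable {X : Type*} [Fintype X] {d : (X → X → Prop) → (X → X → Prop) → ℝ}
  {R : X → X → Prop} {a b c : X}

theorem Axiom3.dist_oplusR (h3 : Axiom3 d) (hab : a ≠ b) (hnab : ¬ asymPart R a b)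
    (hnba : ¬ asymPart R b a) (h : AcyclicOrd (oplusR R a b)) :
    d R (oplusR R a b) = 2 ^ Nnum (oplusR R a b) b * d (RabRel a b) (RabPlusRel a b) := by
  rw [h3.1 R a b (h.of_oplusR hab hnba) hab hnab hnba h,
    Nnum_eq_Nnum_oplusR_add_one hab hnab hnba, Nat.add_sub_cancel]

theorem dist_oplusR_oplusR (h1 : Axiom1 d) (h3 : Axiom3 d)
    (hab : a ≠ b) (hcb : c ≠ b) (hac : a ≠ c)
    (hnab : ¬ asymPart R a b) (hnba : ¬ asymPart R b a)
    (hncb : ¬ asymPart R c b) (hnbc : ¬ asymPart R b c)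
    (h : AcyclicOrd (oplusR (oplusR R a b) c b)) :
    d R (oplusR (oplusR R a b) c b) =
      2 ^ Nnum (oplusR (oplusR R a b) c b) b *
        (2 * d (RabRel a b) (RabPlusRel a b) + d (RabRel c b) (RabPlusRel c b)) := by
  have hncb' : ¬ asymPart (oplusR R a b) c b := by
    simp [asymPart_oplusR_iff hab hnba, hncb, hac.symm]
  have hnbc' : ¬ asymPart (oplusR R a b) b c := by
    simp [asymPart_oplusR_iff hab hnba, hnbc, hab.symm]
  have hRab : AcyclicOrd (oplusR R a b) := h.of_oplusR hcb hnbc'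
  have habove : asymPart (oplusR (oplusR R a b) c b) a b := by
    simp [asymPart_oplusR_iff hcb hnbc', asymPart_oplusR_iff hab hnba]
  have hstep : OneStep R (oplusR R a b) (oplusR (oplusR R a b) c b) :=
    ⟨hRab, .inr ⟨a, b, hnab, hnba, habove, rfl⟩⟩
  rw [h1 _ _ _ (hRab.of_oplusR hab hnba) h (.of_oneStep hstep),
    h3.dist_oplusR hab hnab hnba hRab, h3.dist_oplusR hcb hncb' hnbc' h,
    Nnum_eq_Nnum_oplusR_add_one hcb hncb' hnbc']
  ring

theorem dist_RabRel_eq_of_acyclicOrd_oplusR_oplusR (h1 : Axiom1 d) (h3 : Axiom3 d)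
    (hab : a ≠ b) (hcb : c ≠ b) (hac : a ≠ c)
    (hnab : ¬ asymPart R a b) (hnba : ¬ asymPart R b a)
    (hncb : ¬ asymPart R c b) (hnbc : ¬ asymPart R b c)
    (h : AcyclicOrd (oplusR (oplusR R a b) c b)) :
    d (RabRel a b) (RabPlusRel a b) = d (RabRel c b) (RabPlusRel c b) := by
  have hcomm : oplusR (oplusR R a b) c b = oplusR (oplusR R c b) a b :=
    oplusR_comm (by simp [hac, hab])
  have hac_path := dist_oplusR_oplusR h1 h3 hab hcb hac hnab hnba hncb hnbc h
  have hca_path := dist_oplusR_oplusR h1 h3 hcb hab hac.symm hncb hnbc hnab hnba (hcomm ▸ h)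
  rw [← hcomm, hac_path] at hca_path
  have hsum : 2 * d (RabRel a b) (RabPlusRel a b) + d (RabRel c b) (RabPlusRel c b) =
      2 * d (RabRel c b) (RabPlusRel c b) + d (RabRel a b) (RabPlusRel a b) :=
    mul_left_cancel₀ (pow_ne_zero _ two_ne_zero) hca_path
  linarith

end Axioms

theorem stmt_5_general {X : Type*} [Fintype X] (d : (X → X → Prop) → (X → X → Prop) → ℝ)
    (h1 : Axiom1 d) (h3 : Axiom3 d) (a b c : X) (hab : a ≠ b) (hbc : b ≠ c) (hac : a ≠ c) :
    d (RabRel a b) (RabPlusRel a b) = d (RabRel c b) (RabPlusRel c b) := by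
  have not_asymPart_eq : ∀ x y : X, ¬ asymPart Eq x y := fun x y h => h.2 h.1.symm
  have hacyclic : AcyclicOrd (oplusR (oplusR Eq a b) c b) := by
    refine ⟨fun x => by grind [oplusR], acyclicRel_of_asymPart_imp_eq (b := b) fun x y hxy => ?_⟩
    grind [asymPart_oplusR_iff]
  exact dist_RabRel_eq_of_acyclicOrd_oplusR_oplusR h1 h3 hab hbc.symm hac (not_asymPart_eq a b)
    (not_asymPart_eq b a) (not_asymPart_eq c b) (not_asymPart_eq b c) hacyclic

/-- Lemma 3.4: if a semimetric `d` on the acyclic orders satisfies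
Axioms 1 and 3 then `d(≿_{ab},≿_{ab}^+) = d(≿_{cb},≿_{cb}^+)` for pairwise
distinct `a,b,c`. -/
theorem stmt_5 {X : Type*} [Fintype X] [DecidableEq X]
    (d : (X → X → Prop) → (X → X → Prop) → ℝ)
    (hd : IsSemimetricOn d) (h1 : Axiom1 d) (h3 : Axiom3 d)
    (a b c : X) (hab : a ≠ b) (hbc : b ≠ c) (hac : a ≠ c) :
    d (RabRel a b) (RabPlusRel a b) = d (RabRel c b) (RabPlusRel c b) :=
  stmt_5_general d h1 h3 a b c hab hbc hac
end

section
/- Let X be a nonempty finite set. A semimetric d : A(X) × A(X) → [0,∞) satisfies Axioms 1, 3 and 4 if, and only if, d = D^μ for some positive measure μ on 2^X, i.e., d is a μ-top-difference semimetric. -/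
open Classical Finset symmDiff

/-!
The idea: changing an acyclic order by the single strict comparison `a ≻ b` changes `M(S, ≿)` only
for the `S` with `{a, b} ⊆ S ⊆ {x | ¬ x ≻ b}`, and there it changes it exactly by the element `b`.
So one such step costs `2 ^ N * μ {b}` in `D^μ`, which is Axiom 3. A step toward `⊵` keeps every
`M(S, ·)` in the lattice interval spanned by the two ends, and intervals compose along chains of
steps; since `Σ_{x ∈ A ∆ B} μ {x}` is additive on intervals, Axiom 1 holds, whatever the signs of
the weights.

Conversely, raising `a` and then `a'` above `b`, or `a'` and then `a`, shows that the constants in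
Axiom 3 depend on `b` only, which defines the weights. Two acyclic orders with different strict
parts always admit a step of one toward the other, and each step decreases the number of
disagreements, so Axioms 1, 3 and 4 determine `d` by induction.
-/

section Cycles

open Relation

variable {X : Type*} {r s : X → X → Prop} {a b x y : X}

lemma exists_nodup_isChain_of_reflTransGen (h : ReflTransGen r a b) :
    ∃ l : List X, (a :: l).IsChain r ∧ (a :: l).getLast (List.cons_ne_nil a l) = b ∧
      (a :: l).Nodup := by
  induction h using ReflTransGen.head_induction_on with
  | refl => exact ⟨[], by simp⟩
  | @head a c hac _ ih =>
    obtain ⟨l, hchain, hlast, hnodup⟩ := ih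
    by_cases ha : a ∈ c :: l
    · obtain ⟨s, t, hst⟩ := List.append_of_mem ha
      have hsuffix : a :: t <:+ c :: l := ⟨s, hst.symm⟩
      refine ⟨t, hchain.suffix hsuffix, ?_, hnodup.sublist hsuffix.sublist⟩
      rw [← hlast, hsuffix.getLast]
    · exact ⟨c :: l, hchain.cons_cons hac, by simpa using hlast, List.nodup_cons.2 ⟨ha, hnodup⟩⟩

lemma exists_injective_cycle_of_transGen_self (h : TransGen r x x) :
    ∃ (k : ℕ) (z : Fin (k + 1) → X), Function.Injective z ∧ ∀ i, r (z i) (z (i + 1)) := by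
  obtain ⟨y, hxy, hyx⟩ := TransGen.tail'_iff.1 h
  obtain ⟨l, hchain, hlast, hnodup⟩ := exists_nodup_isChain_of_reflTransGen hxy
  refine ⟨l.length, (x :: l).get, hnodup.injective_get, fun i => ?_⟩
  cases i using Fin.lastCases with
  | last =>
    have hy : (x :: l).get (Fin.last l.length) = y := by
      rw [← hlast, List.getLast_eq_getElem]; rfl
    rw [Fin.last_add_one, hy]
    exact hyx
  | cast i =>
    rw [Fin.coeSucc_eq_succ]
    exact List.isChain_iff_getElem.1 hchain i (by simp)

lemma transGen_self_of_cycle {k : ℕ} {z : Fin (k + 1) → X} (hz : ∀ i, r (z i) (z (i + 1))) :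
    TransGen r (z 0) (z 0) := by
  have hreach (i : Fin (k + 1)) : ReflTransGen r (z 0) (z i) := by
    induction i using Fin.induction with
    | zero => exact .refl
    | succ i ih => exact ih.tail (Fin.coeSucc_eq_succ (a := i) ▸ hz i.castSucc)
  exact .tail' (hreach (Fin.last k)) (Fin.last_add_one k ▸ hz (Fin.last k))

lemma transGen_or_of_edge (hs : ∀ x y, s x y → r x y ∨ (x = a ∧ y = b)) (h : TransGen s x y) :
    TransGen r x y ∨ (ReflTransGen r x a ∧ ReflTransGen r b y) := by
  induction h with
  | single h =>
    rcases hs _ _ h with h | ⟨rfl, rfl⟩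
    · exact .inl (.single h)
    · exact .inr ⟨.refl, .refl⟩
  | tail _ h ih =>
    rcases hs _ _ h with h | ⟨rfl, rfl⟩
    · exact ih.imp (·.tail h) (.imp_right (·.tail h))
    · exact .inr ⟨ih.elim TransGen.to_reflTransGen And.left, .refl⟩

lemma transGen_mono_of_reachable (hrs : ∀ x y, TransGen r a y → r x y → s x y)
    (h : TransGen r a b) : TransGen s a b := by
  induction h with
  | single h => exact .single (hrs _ _ (.single h) h)
  | tail hab h ih => exact ih.tail (hrs _ _ (hab.tail h) h)

end Cycles

section AcyclicOrders

open Relation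

variable {X : Type*} {R R' : X → X → Prop} {a b : X}

lemma not_asymPart_self (R : X → X → Prop) (a : X) : ¬ asymPart R a a := fun h => h.2 h.1

lemma ne_of_asymPart (h : asymPart R a b) : a ≠ b := by
  rintro rfl
  exact not_asymPart_self R a h

lemma acyclicRel_iff_forall_not_transGen_self :
    AcyclicRel R ↔ ∀ x, ¬ TransGen (asymPart R) x x := by
  refine ⟨fun h x hx => h (exists_injective_cycle_of_transGen_self hx), ?_⟩
  rintro h ⟨k, z, -, hz⟩
  exact h _ (transGen_self_of_cycle hz)

lemma acyclicRel_of_strictMono {α : Type*} [Preorder α] (f : X → α)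
    (hf : ∀ x y, asymPart R x y → f x < f y) : AcyclicRel R :=
  acyclicRel_iff_forall_not_transGen_self.2 fun x hx =>
    lt_irrefl (f x) <| by simpa [Function.onFun, transGen_eq_self] using TransGen.lift f hf x x hx

lemma asymPart_RabRel (a b x y : X) :
    asymPart (RabRel a b) x y ↔ (x ≠ a ∧ x ≠ b) ∧ (y = a ∨ y = b) := by
  unfold asymPart RabRel
  grind

lemma acyclicOrd_RabRel (a b : X) : AcyclicOrd (RabRel a b) := by
  refine ⟨fun x => .inl rfl, acyclicRel_of_strictMono (fun x => if x = a ∨ x = b then 1 else 0) ?_⟩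
  intro x y h
  simp [(asymPart_RabRel a b x y).1 h]

end AcyclicOrders

/-- The elements not strictly above `b`, including `b` itself: in `S`, the element `b` is maximal
exactly when `S` contains only such elements. -/
noncomputable def notAbove {X : Type*} [Fintype X] (R : X → X → Prop) (b : X) : Finset X :=
  univ.filter fun x => ¬ asymPart R x b

lemma card_notAbove {X : Type*} [Fintype X] (R : X → X → Prop) (b : X) :
    (notAbove R b).card = Nnum R b + 1 := by
  have hinsert : notAbove R b = insert b (univ.filter fun x => x ≠ b ∧ ¬ asymPart R x b) := by
    ext x
    have := not_asymPart_self R b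
    simp only [notAbove, mem_filter_univ, mem_insert]
    grind
  rw [hinsert, card_insert_of_notMem (by simp), Nnum]

/-- `AddsEdge P Q a b` says that the strict comparisons of `Q` are those of `P` together with the
new comparison of `a` above `b`. It is the common form of the perturbations `⊕` and `⊖`: the former
goes from `P` to `Q`, the latter from `Q` to `P`. -/
structure AddsEdge {X : Type*} (P Q : X → X → Prop) (a b : X) : Prop where
  not_asymPart : ¬ asymPart P a b
  asymPart_iff : ∀ x y, asymPart Q x y ↔ asymPart P x y ∨ (x = a ∧ y = b)

section Perturbations

variable {X : Type*} {R : X → X → Prop} {a b : X}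

lemma addsEdge_oplusR (hab : a ≠ b) (h₁ : ¬ asymPart R a b) (h₂ : ¬ asymPart R b a) :
    AddsEdge R (oplusR R a b) a b := by
  refine ⟨h₁, fun x y => ?_⟩
  unfold asymPart oplusR at *
  grind

lemma addsEdge_ominusR (h : asymPart R a b) : AddsEdge (ominusR R a b) R a b := by
  unfold asymPart at h
  constructor <;> unfold asymPart ominusR <;> grind

lemma addsEdge_RabPlusRel (hab : a ≠ b) : AddsEdge (RabRel a b) (RabPlusRel a b) a b := by
  constructor <;> unfold asymPart <;> simp only [RabPlusRel, RabRel] <;> grind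

end Perturbations

namespace AddsEdge

open Relation

variable {X : Type*} {P Q : X → X → Prop} {a b : X}

lemma asymPart_right (h : AddsEdge P Q a b) : asymPart Q a b :=
  (h.asymPart_iff a b).2 (.inr ⟨rfl, rfl⟩)

lemma ne (h : AddsEdge P Q a b) : a ≠ b := ne_of_asymPart h.asymPart_right

lemma acyclicRel_left (h : AddsEdge P Q a b) (hQ : AcyclicRel Q) : AcyclicRel P := by
  rw [acyclicRel_iff_forall_not_transGen_self] at hQ ⊢
  exact fun x hx => hQ x (TransGen.mono (fun x y hxy => (h.asymPart_iff x y).2 (.inl hxy)) _ _ hx)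

lemma acyclicRel_right (h : AddsEdge P Q a b) (hP : AcyclicRel P)
    (hba : ¬ TransGen (asymPart P) b a) : AcyclicRel Q := by
  rw [acyclicRel_iff_forall_not_transGen_self] at hP ⊢
  intro x hx
  rcases transGen_or_of_edge (fun x y => (h.asymPart_iff x y).1) hx with hx | ⟨hxa, hbx⟩
  · exact hP x hx
  · exact (reflTransGen_iff_eq_or_transGen.1 (hbx.trans hxa)).elim h.ne hba

section MaxSet

variable [DecidableEq X]

lemma maxSet_eq (h : AddsEdge P Q a b) (S : Finset X) :
    MaxSet S Q = if a ∈ S then (MaxSet S P).erase b else MaxSet S P := by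
  ext x
  have := h.asymPart_iff
  split_ifs <;> simp only [MaxSet, mem_filter, mem_erase] <;> grind

lemma maxSet_anti (h : AddsEdge P Q a b) (S : Finset X) : MaxSet S Q ⊆ MaxSet S P := by
  rw [h.maxSet_eq S]
  split_ifs
  exacts [erase_subset _ _, Subset.rfl]

variable [Fintype X]

lemma symmDiff_maxSet (h : AddsEdge P Q a b) (S : Finset X) :
    MaxSet S P ∆ MaxSet S Q =
      if S ∈ Finset.Icc {a, b} (notAbove P b) then {b} else ∅ := by
  have hS : S ∈ Finset.Icc {a, b} (notAbove P b) ↔ a ∈ S ∧ b ∈ MaxSet S P := by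
    simp [MaxSet, notAbove, subset_iff, and_assoc]
  simp only [h.maxSet_eq S, hS]
  ext x
  split_ifs <;> simp only [mem_symmDiff, mem_erase] <;> grind

end MaxSet

variable [Fintype X]

lemma nnum_eq (h : AddsEdge P Q a b) : Nnum P b = Nnum Q b + 1 := by
  have hinsert : (univ.filter fun x => x ≠ b ∧ ¬ asymPart P x b) =
      insert a (univ.filter fun x => x ≠ b ∧ ¬ asymPart Q x b) := by
    ext x
    have := h.ne
    have := h.not_asymPart
    have := h.asymPart_iff x b
    simp only [mem_filter_univ, mem_insert]
    grind
  rw [Nnum, hinsert, card_insert_of_notMem (by simp [h.asymPart_right]), Nnum]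

lemma card_Icc_notAbove [DecidableEq X] (h : AddsEdge P Q a b) :
    (Finset.Icc {a, b} (notAbove P b)).card = 2 ^ Nnum Q b := by
  have hpair : {a, b} ⊆ notAbove P b := by
    simp [notAbove, insert_subset_iff, h.not_asymPart, not_asymPart_self]
  rw [card_Icc_finset hpair, card_notAbove, h.nnum_eq, card_pair h.ne]
  rfl

lemma dmu_eq [DecidableEq X] (h : AddsEdge P Q a b) (w : X → ℝ) :
    Dmu w P Q = 2 ^ Nnum Q b * w b := by
  have hsum (S : Finset X) : ∑ x ∈ MaxSet S P ∆ MaxSet S Q, w x =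
      if S ∈ Finset.Icc {a, b} (notAbove P b) then w b else 0 := by
    rw [h.symmDiff_maxSet S]
    split_ifs <;> simp
  simp only [Dmu, hsum]
  rw [sum_ite_mem, univ_inter, sum_const, h.card_Icc_notAbove, nsmul_eq_mul]
  norm_cast

end AddsEdge

section OneStep

open Relation

variable {X : Type*} {R R₀ R' Q : X → X → Prop} {a b : X}

lemma OneStep.addsEdge (h : OneStep R R₀ R') : ∃ a b,
    (AddsEdge R₀ R a b ∧ ¬ asymPart R' a b ∧ ∀ x, asymPart R' x b → asymPart R x b) ∨
      (AddsEdge R R₀ a b ∧ asymPart R' a b) := by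
  obtain ⟨-, ⟨a, b, hab, hab', hb, rfl⟩ | ⟨a, b, hab, hba, hab', rfl⟩⟩ := h
  · exact ⟨a, b, .inl ⟨addsEdge_ominusR hab, hab', hb⟩⟩
  · exact ⟨a, b, .inr ⟨addsEdge_oplusR (ne_of_asymPart hab') hab hba, hab'⟩⟩

lemma OneStep.inBetween (h : OneStep R R₀ R') : InBetween R R' R₀ :=
  ⟨0, fun _ => R₀, h, fun i => i.elim0, rfl⟩

lemma InBetween.transGen (h : InBetween R R' Q) : TransGen (OneStep · · R') R Q := by
  obtain ⟨n, c, hfirst, hstep, rfl⟩ := h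
  have hreach (i : Fin (n + 1)) : TransGen (OneStep · · R') R (c i) := by
    induction i using Fin.induction with
    | zero => exact .single hfirst
    | succ i ih => exact ih.tail (hstep i)
  exact hreach (Fin.last n)

lemma InBetween.acyclicOrd (h : InBetween R R' Q) : AcyclicOrd Q := by
  obtain ⟨_, _, hstep⟩ := TransGen.tail'_iff.1 h.transGen
  exact hstep.1

lemma acyclicOrd_oplusR (hR : AcyclicOrd R) (hab : a ≠ b) (h : ¬ asymPart R a b)
    (hba : ¬ TransGen (asymPart R) b a) : AcyclicOrd (oplusR R a b) :=
  ⟨fun x => .inl ⟨hR.1 x, fun hx => hab (hx.2.2.symm.trans hx.2.1)⟩,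
    (addsEdge_oplusR hab h fun h' => hba (.single h')).acyclicRel_right hR.2 hba⟩

lemma acyclicOrd_ominusR (hR : AcyclicOrd R) (h : asymPart R a b) : AcyclicOrd (ominusR R a b) :=
  ⟨fun x => ⟨hR.1 x, fun hx => ne_of_asymPart h (hx.1.symm.trans hx.2)⟩,
    (addsEdge_ominusR h).acyclicRel_left hR.2⟩

-- If adding `(a, b)` closed a cycle, the part from `b` to `a` would run inside `R'` as well.
lemma oneStep_oplusR_of_reachable (hR : AcyclicOrd R) (hR' : AcyclicOrd R')
    (hab' : asymPart R' a b) (hab : ¬ asymPart R a b)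
    (hbelow : ∀ x y, TransGen (asymPart R) b y → asymPart R x y → asymPart R' x y) :
    OneStep R (oplusR R a b) R' := by
  have hba : ¬ TransGen (asymPart R) b a := fun h =>
    acyclicRel_iff_forall_not_transGen_self.1 hR'.2 a
      (.head hab' (transGen_mono_of_reachable hbelow h))
  exact ⟨acyclicOrd_oplusR hR (ne_of_asymPart hab') hab hba,
    .inr ⟨a, b, hab, fun h => hba (.single h), hab', rfl⟩⟩

lemma AcyclicRel.wellFounded_below [Finite X] (hR : AcyclicRel R) :
    WellFounded fun x y => TransGen (asymPart R) y x := by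
  have : IsTrans X fun x y => TransGen (asymPart R) y x := ⟨fun _ _ _ hxy hyz => hyz.trans hxy⟩
  have : Std.Irrefl fun x y => TransGen (asymPart R) y x :=
    ⟨acyclicRel_iff_forall_not_transGen_self.1 hR⟩
  exact Finite.wellFounded_of_trans_of_irrefl _

lemma exists_oneStep [Finite X] (hR : AcyclicOrd R) (hR' : AcyclicOrd R')
    (hne : ¬ ∀ x y, asymPart R x y ↔ asymPart R' x y) : ∃ R₀, OneStep R R₀ R' := by
  by_cases hB : ∃ b a, asymPart R a b ∧ ¬ asymPart R' a b
  · obtain ⟨b, ⟨a, hab, hab'⟩, hmin⟩ := hR.2.wellFounded_below.has_min _ hB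
    have hbelow (x y) (hby : TransGen (asymPart R) b y) (hxy : asymPart R x y) :
        asymPart R' x y := by
      by_contra hxy'
      exact hmin y ⟨x, hxy, hxy'⟩ hby
    by_cases hb : ∀ x, asymPart R' x b → asymPart R x b
    · exact ⟨_, acyclicOrd_ominusR hR hab, .inl ⟨a, b, hab, hab', hb, rfl⟩⟩
    · push Not at hb
      obtain ⟨x, hxb', hxb⟩ := hb
      exact ⟨_, oneStep_oplusR_of_reachable hR hR' hxb' hxb hbelow⟩
  · have hle (x y) (hxy : asymPart R x y) : asymPart R' x y := by
      by_contra hxy'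
      exact hB ⟨y, x, hxy, hxy'⟩
    obtain ⟨a, b, hab', hab⟩ : ∃ a b, asymPart R' a b ∧ ¬ asymPart R a b := by
      by_contra! h
      exact hne fun x y => ⟨hle x y, h x y⟩
    exact ⟨_, oneStep_oplusR_of_reachable hR hR' hab' hab fun x y _ => hle x y⟩

lemma acyclicOrd_RabPlusRel (hab : a ≠ b) : AcyclicOrd (RabPlusRel a b) := by
  refine ⟨fun x => .inl (.inl rfl), (addsEdge_RabPlusRel hab).acyclicRel_right
    (acyclicOrd_RabRel a b).2 fun h => ?_⟩
  obtain ⟨x, hbx, -⟩ := TransGen.head'_iff.1 h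
  exact ((asymPart_RabRel a b b x).1 hbx).1.2 rfl

/-- The ordered pairs that `R` and `R'` compare strictly in different ways; a measure of how far
apart the two relations are. -/
def disagreement (R R' : X → X → Prop) : Set (X × X) :=
  {p | ¬ (asymPart R p.1 p.2 ↔ asymPart R' p.1 p.2)}

lemma OneStep.disagreement_ssubset (h : OneStep R R₀ R') :
    disagreement R₀ R' ⊂ disagreement R R' := by
  obtain ⟨a, b, ⟨hedge, hab', -⟩ | ⟨hedge, hab'⟩⟩ := h.addsEdge
  all_goals
    have hnot := hedge.not_asymPart
    have hiff := hedge.asymPart_iff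
    refine Set.ssubset_iff_exists.2 ⟨fun p => ?_, (a, b), ?_⟩ <;>
      simp only [disagreement, Set.mem_ofPred_eq] <;> grind

lemma AcyclicOrd.induction_toward [Finite X] (hR' : AcyclicOrd R') {p : (X → X → Prop) → Prop}
    (base : ∀ R, AcyclicOrd R → (∀ x y, asymPart R x y ↔ asymPart R' x y) → p R)
    (step : ∀ R R₀, AcyclicOrd R → OneStep R R₀ R' → p R₀ → p R) (hR : AcyclicOrd R) : p R := by
  induction hD : disagreement R R' using WellFoundedLT.induction generalizing R with
  | _ D ih =>
    subst hD
    by_cases heq : ∀ x y, asymPart R x y ↔ asymPart R' x y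
    · exact base R hR heq
    · obtain ⟨R₀, h⟩ := exists_oneStep hR hR' heq
      exact step R R₀ hR h (ih _ h.disagreement_ssubset h.1 rfl)

end OneStep

lemma nnum_RabPlusRel {X : Type*} [Fintype X] {a b : X} (hab : a ≠ b) :
    Nnum (RabPlusRel a b) b = 0 := by
  rw [Nnum, card_eq_zero, filter_eq_empty_iff]
  intro x _
  have := (addsEdge_RabPlusRel hab).asymPart_iff x b
  have := asymPart_RabRel a b x b
  grind

section TopDifference

variable {X : Type*} [DecidableEq X] {R R₀ R' Q : X → X → Prop} {a b : X}

lemma maxSet_congr (h : ∀ x y, asymPart R x y ↔ asymPart R' x y) (S : Finset X) :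
    MaxSet S R = MaxSet S R' := by
  simp only [MaxSet, h]

lemma OneStep.maxSet_mem_uIcc (h : OneStep R R₀ R') (S : Finset X) :
    MaxSet S R₀ ∈ Set.uIcc (MaxSet S R) (MaxSet S R') := by
  obtain ⟨a, b, ⟨hedge, hab', hb⟩ | ⟨hedge, hab'⟩⟩ := h.addsEdge
  · refine ⟨inter_subset_left.trans (hedge.maxSet_anti S), fun x hx => ?_⟩
    have hiff := hedge.asymPart_iff
    simp only [sup_eq_union, mem_union, MaxSet, mem_filter] at hx ⊢
    grind
  · refine ⟨fun x hx => ?_, (hedge.maxSet_anti S).trans subset_union_left⟩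
    have hiff := hedge.asymPart_iff
    simp only [inf_eq_inter, mem_inter, MaxSet, mem_filter] at hx ⊢
    grind

lemma InBetween.maxSet_mem_uIcc (h : InBetween R R' Q) (S : Finset X) :
    MaxSet S Q ∈ Set.uIcc (MaxSet S R) (MaxSet S R') := by
  replace h := h.transGen
  induction h with
  | single hstep => exact hstep.maxSet_mem_uIcc S
  | tail _ hstep ih => exact Set.uIcc_subset_uIcc_right ih (hstep.maxSet_mem_uIcc S)

lemma sum_symmDiff_of_mem_uIcc {M : Type*} [AddCommMonoid M] {A B C : Finset X}
    (hB : B ∈ Set.uIcc A C) (w : X → M) :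
    ∑ x ∈ A ∆ C, w x = ∑ x ∈ A ∆ B, w x + ∑ x ∈ B ∆ C, w x := by
  have hinf (x) (hx : x ∈ A ∩ C) : x ∈ B := hB.1 hx
  have hsup (x) (hx : x ∈ B) : x ∈ A ∪ C := hB.2 hx
  simp only [mem_inter, mem_union] at hinf hsup
  have hdisj : Disjoint (A ∆ B) (B ∆ C) := by
    simp only [disjoint_left, mem_symmDiff]
    grind
  rw [← sum_union hdisj]
  congr 1
  ext x
  simp only [mem_symmDiff, mem_union]
  grind

variable [Fintype X] (w : X → ℝ)

lemma dmu_comm (R R' : X → X → Prop) : Dmu w R R' = Dmu w R' R := by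
  simp only [Dmu, symmDiff_comm]

lemma dmu_eq_zero (h : ∀ x y, asymPart R x y ↔ asymPart R' x y) : Dmu w R R' = 0 := by
  simp [Dmu, maxSet_congr h]

lemma dmu_oplusR (hab : a ≠ b) (h₁ : ¬ asymPart R a b) (h₂ : ¬ asymPart R b a) :
    Dmu w R (oplusR R a b) = 2 ^ (Nnum R b - 1) * w b := by
  have hedge := addsEdge_oplusR hab h₁ h₂
  rw [hedge.dmu_eq, hedge.nnum_eq, Nat.add_sub_cancel]

lemma dmu_ominusR (hab : asymPart R a b) : Dmu w R (ominusR R a b) = 2 ^ Nnum R b * w b := by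
  rw [dmu_comm, (addsEdge_ominusR hab).dmu_eq]

lemma dmu_RabRel (hab : a ≠ b) : Dmu w (RabRel a b) (RabPlusRel a b) = w b := by
  rw [(addsEdge_RabPlusRel hab).dmu_eq, nnum_RabPlusRel hab, pow_zero, one_mul]

lemma InBetween.dmu_add (h : InBetween R R' Q) : Dmu w R R' = Dmu w R Q + Dmu w Q R' := by
  simp only [Dmu, ← sum_add_distrib, sum_symmDiff_of_mem_uIcc (h.maxSet_mem_uIcc _)]

end TopDifference

section Star

variable {X : Type*} {A : Set X} {a b : X}

/-- The acyclic order in which every element of `A` is strictly above `b` and there is no other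
strict comparison; meant for `b ∉ A`. -/
def starRel (A : Set X) (b : X) : X → X → Prop := fun x y => x = y ∨ (x ∈ A ∧ y = b)

lemma asymPart_starRel (hb : b ∉ A) (x y : X) :
    asymPart (starRel A b) x y ↔ x ∈ A ∧ y = b := by
  unfold asymPart starRel
  grind

lemma acyclicOrd_starRel (hb : b ∉ A) : AcyclicOrd (starRel A b) := by
  refine ⟨fun x => .inl rfl, acyclicRel_of_strictMono (fun x => if x = b then 1 else 0) ?_⟩
  intro x y h
  have hxy := ne_of_asymPart h
  obtain ⟨-, rfl⟩ := (asymPart_starRel hb x y).1 h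
  simp [hxy]

lemma oplusR_starRel (hb : b ∉ A) (hab : a ≠ b) :
    oplusR (starRel A b) a b = starRel (insert a A) b := by
  ext x y
  simp only [oplusR, starRel, Set.mem_insert_iff]
  grind

lemma addsEdge_starRel_insert (hb : b ∉ A) (hab : a ≠ b) (ha : a ∉ A) :
    AddsEdge (starRel A b) (starRel (insert a A) b) a b := by
  rw [← oplusR_starRel hb hab]
  exact addsEdge_oplusR hab (by simp [asymPart_starRel hb, ha]) (by simp [asymPart_starRel hb, hb])

lemma oneStep_starRel_insert {R : X → X → Prop} (hb : b ∉ A) (ha : a ∉ A) (hR : asymPart R a b) :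
    OneStep (starRel A b) (starRel (insert a A) b) R := by
  have hab := ne_of_asymPart hR
  refine ⟨acyclicOrd_starRel (by simp [hab.symm, hb]), .inr ⟨a, b, ?_, ?_, hR, ?_⟩⟩
  · exact (addsEdge_starRel_insert hb hab ha).not_asymPart
  · simp [asymPart_starRel hb, hb]
  · exact (oplusR_starRel hb hab).symm

end Star

section Axiom3Constants

variable {X : Type*} [Fintype X] {d : (X → X → Prop) → (X → X → Prop) → ℝ} {A : Set X} {a a' b : X}

lemma Axiom3.starRel_insert (h3 : Axiom3 d) (hb : b ∉ A) (hab : a ≠ b) (ha : a ∉ A) :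
    d (starRel A b) (starRel (insert a A) b) =
      2 ^ Nnum (starRel (insert a A) b) b * d (RabRel a b) (RabPlusRel a b) := by
  have hedge := addsEdge_starRel_insert hb hab ha
  have hacyclic : AcyclicOrd (starRel (insert a A) b) := acyclicOrd_starRel (by simp [hab.symm, hb])
  have hd := h3.1 _ a b (acyclicOrd_starRel hb) hab hedge.not_asymPart
    (by simp [asymPart_starRel hb, hb])
  rw [oplusR_starRel hb hab] at hd
  simpa [hedge.nnum_eq] using hd hacyclic

lemma dist_starRel_pair (h1 : Axiom1 d) (h3 : Axiom3 d) (ha : a ≠ b) (ha' : a' ≠ b)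
    (haa' : a' ≠ a) :
    d (starRel ∅ b) (starRel {a', a} b) = 2 ^ Nnum (starRel {a', a} b) b *
      (2 * d (RabRel a b) (RabPlusRel a b) + d (RabRel a' b) (RabPlusRel a' b)) := by
  have hb₀ : b ∉ (∅ : Set X) := Set.notMem_empty b
  have hb₁ : b ∉ ({a} : Set X) := ha.symm
  have hb₂ : b ∉ ({a', a} : Set X) := by simp [ha.symm, ha'.symm]
  have hfirst : OneStep (starRel ∅ b) (starRel {a} b) (starRel {a', a} b) := by
    simpa using oneStep_starRel_insert hb₀ (Set.notMem_empty a)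
      ((asymPart_starRel hb₂ a b).2 (by simp))
  have hd₁ := h3.starRel_insert hb₀ ha (Set.notMem_empty a)
  have hd₂ := h3.starRel_insert hb₁ ha' haa'
  rw [insert_empty_eq, (addsEdge_starRel_insert hb₁ ha' haa').nnum_eq] at hd₁
  rw [h1 _ _ _ (acyclicOrd_starRel hb₀) (acyclicOrd_starRel hb₂) hfirst.inBetween, hd₁, hd₂]
  ring

lemma axiom3_constant_eq (h1 : Axiom1 d) (h3 : Axiom3 d) (ha : a ≠ b) (ha' : a' ≠ b) :
    d (RabRel a b) (RabPlusRel a b) = d (RabRel a' b) (RabPlusRel a' b) := by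
  rcases eq_or_ne a' a with rfl | haa'
  · rfl
  have hpair := dist_starRel_pair h1 h3 ha ha' haa'
  rw [Set.pair_comm, dist_starRel_pair h1 h3 ha' ha haa'.symm] at hpair
  have := mul_left_cancel₀ (by positivity) hpair
  linarith

lemma exists_weight_of_axiom1_of_axiom3 (h1 : Axiom1 d) (h3 : Axiom3 d) :
    ∃ w : X → ℝ, ∀ a b, a ≠ b → d (RabRel a b) (RabPlusRel a b) = w b := by
  have hconst (b : X) : ∃ c, ∀ a, a ≠ b → d (RabRel a b) (RabPlusRel a b) = c := by
    by_cases h : ∃ a, a ≠ b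
    · obtain ⟨a, ha⟩ := h
      exact ⟨_, fun a' ha' => axiom3_constant_eq h1 h3 ha' ha⟩
    · exact ⟨0, fun a ha => absurd ⟨a, ha⟩ h⟩
  choose w hw using hconst
  exact ⟨w, fun a b => hw b a⟩

end Axiom3Constants

section Characterization

variable {X : Type*} [Fintype X] [DecidableEq X] {d : (X → X → Prop) → (X → X → Prop) → ℝ}
  {w : X → ℝ}

lemma Axiom3.eq_dmu_of_oneStep {R R₀ R' : X → X → Prop} (h3 : Axiom3 d)
    (hw : ∀ a b, a ≠ b → d (RabRel a b) (RabPlusRel a b) = w b) (hR : AcyclicOrd R)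
    (h : OneStep R R₀ R') : d R R₀ = Dmu w R R₀ := by
  obtain ⟨hR₀, ⟨a, b, hab, -, -, rfl⟩ | ⟨a, b, hab, hba, hab', rfl⟩⟩ := h
  · rw [h3.2 R a b hR hab, hw a b (ne_of_asymPart hab), dmu_ominusR w hab]
  · have hne := ne_of_asymPart hab'
    rw [h3.1 R a b hR hne hab hba hR₀, hw a b hne, dmu_oplusR w hne hab hba]

lemma eq_dmu_of_axioms {R R' : X → X → Prop} (h1 : Axiom1 d) (h3 : Axiom3 d) (h4 : Axiom4 d)
    (hw : ∀ a b, a ≠ b → d (RabRel a b) (RabPlusRel a b) = w b) (hR : AcyclicOrd R)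
    (hR' : AcyclicOrd R') : d R R' = Dmu w R R' := by
  refine hR'.induction_toward (p := fun R => d R R' = Dmu w R R') ?_ ?_ hR
  · intro R hR heq
    rw [h4 R R' hR hR' heq, dmu_eq_zero w heq]
  · intro R R₀ hR hstep ih
    rw [h1 R R₀ R' hR hR' hstep.inBetween, hstep.inBetween.dmu_add w, ih,
      h3.eq_dmu_of_oneStep hw hR hstep]

lemma axiom1_of_eq_dmu (hd : ∀ R R', AcyclicOrd R → AcyclicOrd R' → d R R' = Dmu w R R') :
    Axiom1 d := by
  intro R Q R' hR hR' hQ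
  rw [hd R R' hR hR', hd R Q hR hQ.acyclicOrd, hd Q R' hQ.acyclicOrd hR', hQ.dmu_add w]

lemma axiom3_of_eq_dmu (hd : ∀ R R', AcyclicOrd R → AcyclicOrd R' → d R R' = Dmu w R R') :
    Axiom3 d := by
  have hw {a b : X} (hab : a ≠ b) : d (RabRel a b) (RabPlusRel a b) = w b := by
    rw [hd _ _ (acyclicOrd_RabRel a b) (acyclicOrd_RabPlusRel hab), dmu_RabRel w hab]
  constructor
  · intro R a b hR hab h₁ h₂ hR₀
    rw [hd _ _ hR hR₀, hw hab, dmu_oplusR w hab h₁ h₂]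
  · intro R a b hR hab
    rw [hd _ _ hR (acyclicOrd_ominusR hR hab), hw (ne_of_asymPart hab), dmu_ominusR w hab]

lemma axiom4_of_eq_dmu (hd : ∀ R R', AcyclicOrd R → AcyclicOrd R' → d R R' = Dmu w R R') :
    Axiom4 d := fun R R' hR hR' h => by rw [hd R R' hR hR', dmu_eq_zero w h]

-- On a one-point set every `D^μ` vanishes, so only there may the given weight be negative.
lemma exists_eq_dmu_iff_exists_nonneg
    (hd : ∀ R R', AcyclicOrd R → AcyclicOrd R' → 0 ≤ d R R') :
    (∃ w : X → ℝ, ∀ R R', AcyclicOrd R → AcyclicOrd R' → d R R' = Dmu w R R') ↔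
      ∃ w : X → ℝ, (∀ x, 0 ≤ w x) ∧
        ∀ R R', AcyclicOrd R → AcyclicOrd R' → d R R' = Dmu w R R' := by
  refine ⟨fun ⟨w, hw⟩ => ?_, fun ⟨w, _, hw⟩ => ⟨w, hw⟩⟩
  rcases subsingleton_or_nontrivial X with hX | hX
  · have hasym (R : X → X → Prop) (x y : X) : ¬ asymPart R x y :=
      fun h => ne_of_asymPart h (Subsingleton.elim x y)
    have hzero (w : X → ℝ) (R R' : X → X → Prop) : Dmu w R R' = 0 :=
      dmu_eq_zero w fun x y => iff_of_false (hasym R x y) (hasym R' x y)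
    exact ⟨0, fun _ => le_rfl, fun R R' hR hR' => by rw [hw R R' hR hR', hzero, hzero]⟩
  · refine ⟨w, fun b => ?_, hw⟩
    obtain ⟨a, hab⟩ := exists_ne b
    have hplus := acyclicOrd_RabPlusRel hab
    rw [← dmu_RabRel w hab, ← hw _ _ (acyclicOrd_RabRel a b) hplus]
    exact hd _ _ (acyclicOrd_RabRel a b) hplus

theorem stmt_6_general (d : (X → X → Prop) → (X → X → Prop) → ℝ) :
    (Axiom1 d ∧ Axiom3 d ∧ Axiom4 d) ↔
      ∃ w : X → ℝ, ∀ R R' : X → X → Prop, AcyclicOrd R → AcyclicOrd R' → d R R' = Dmu w R R' := by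
  constructor
  · rintro ⟨h1, h3, h4⟩
    obtain ⟨w, hw⟩ := exists_weight_of_axiom1_of_axiom3 h1 h3
    exact ⟨w, fun R R' => eq_dmu_of_axioms h1 h3 h4 hw⟩
  · rintro ⟨w, hd⟩
    exact ⟨axiom1_of_eq_dmu hd, axiom3_of_eq_dmu hd, axiom4_of_eq_dmu hd⟩

end Characterization

/-- Theorem 3.1: a semimetric on the acyclic orders on a nonempty finite
set satisfies Axioms 1, 3 and 4 iff it is the μ-top-difference semimetric for some
positive measure μ on `2^X`. -/
theorem stmt_6 {X : Type*} [Fintype X] [DecidableEq X] [Nonempty X]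
    (d : (X → X → Prop) → (X → X → Prop) → ℝ) (hd : IsSemimetricOn d) :
    (Axiom1 d ∧ Axiom3 d ∧ Axiom4 d) ↔
      ∃ w : X → ℝ, (∀ x, 0 ≤ w x) ∧
        ∀ R R' : X → X → Prop, AcyclicOrd R → AcyclicOrd R' →
          d R R' = Dmu w R R' := by
  exact (stmt_6_general d).trans (exists_eq_dmu_iff_exists_nonneg hd.1)
end

section
/- Let X be a finite set with |X| = n ≥ 3, let Σ be the set of adjacent transpositions of {1,…,n}, and let μ be a positive measure on 2^X such that μ({x}) ≠ μ({y}) for some x, y ∈ X. Then for every weight function ω : Σ → [0,∞), the weighted Kendall metric d_ω does not coincide with D^μ restricted to the set L(X) of linear orders on X; that is, there exist linear orders ≿, ⊵ on X with d_ω(≿,⊵) ≠ D^μ(≿,⊵). -/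
open Classical Finset symmDiff

/-- A linear order: reflexive, transitive, antisymmetric and total. -/
def LinearOrderRel {X : Type*} (R : X → X → Prop) : Prop :=
  Reflexive R ∧ Transitive R ∧ AntiSymmetric R ∧ Total R

/-- `v` is the rank vector `v(≿) = (x_1,…,x_n)` of the linear order `R`,
listing the elements of `X` in strictly decreasing `R`-rank. -/
def IsRankVec {X : Type*} [Fintype X] (R : X → X → Prop)
    (v : Fin (Fintype.card X) → X) : Prop :=
  Function.Bijective v ∧ ∀ i j : Fin (Fintype.card X), i < j → asymPart R (v i) (v j)

/-- An adjacent transposition of `{1,…,n}`. -/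
def AdjTrans {n : ℕ} (σ : Equiv.Perm (Fin n)) : Prop :=
  ∃ (k : ℕ) (h : k + 1 < n), σ = Equiv.swap ⟨k, Nat.lt_of_succ_lt h⟩ ⟨k + 1, h⟩

/-!
A weighted Kendall metric is *neutral*: it only sees which positions are permuted, so relabelling
the alternatives by `σ : Equiv.Perm X` leaves it unchanged. Relabelling both arguments of `D^μ`
instead replaces `μ` by its image under `σ`. Exchanging two adjacent alternatives `a ≻ b` of an
order `≿` costs `2 ^ (N(a,≿) - 1) * (μ{a} + μ{b})`, so if `D^μ` were neutral, the relabelling that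
exchanges `x` and `y` would give `μ{z} + μ{x} = μ{z} + μ{y}` for every third alternative `z`.
-/

section AsymPart

variable {X : Type*} {R : X → X → Prop} {x y : X}

lemma asymPart.asymm (h : asymPart R x y) : ¬ asymPart R y x :=
  fun h' => h'.2 h.1

lemma asymPart_irrefl (R : X → X → Prop) (x : X) : ¬ asymPart R x x :=
  fun h => h.2 h.1

lemma asymPart.ne (h : asymPart R x y) : x ≠ y :=
  fun hxy => asymPart_irrefl R y (hxy ▸ h)

lemma mem_MaxSet [DecidableEq X] {S : Finset X} :
    x ∈ MaxSet S R ↔ x ∈ S ∧ ∀ y ∈ S, ¬ asymPart R y x :=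
  Finset.mem_filter

end AsymPart

section Relabelling

variable {X Y : Type*} {R : Y → Y → Prop}

lemma LinearOrderRel.preimage (hR : LinearOrderRel R) {f : X → Y} (hf : Function.Injective f) :
    LinearOrderRel (f ⁻¹'o R) := by
  obtain ⟨hrefl, htrans, hanti, htotal⟩ := hR
  exact ⟨fun x => hrefl (f x), fun _ _ _ hxy hyz => htrans hxy hyz,
    fun _ _ hxy hyx => hf (hanti hxy hyx), fun x y => htotal (f x) (f y)⟩

lemma MaxSet_map [DecidableEq X] [DecidableEq Y] (f : X ↪ Y) (S : Finset X) :
    MaxSet (S.map f) R = (MaxSet S (f ⁻¹'o R)).map f := by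
  simp only [MaxSet, Finset.filter_map, Function.comp_def, Finset.forall_mem_map]
  rfl

lemma Dmu_preimage [Fintype X] [DecidableEq X] [Fintype Y] [DecidableEq Y] (σ : X ≃ Y)
    (w : X → ℝ) (R R' : Y → Y → Prop) :
    Dmu w (σ ⁻¹'o R) (σ ⁻¹'o R') = Dmu (w ∘ σ.symm) R R' := by
  refine Fintype.sum_equiv σ.finsetCongr _ _ fun S => ?_
  have hmap (Q : Y → Y → Prop) :
      MaxSet (σ.finsetCongr S) Q = (MaxSet S (σ ⁻¹'o Q)).map σ.toEmbedding :=
    MaxSet_map σ.toEmbedding S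
  rw [hmap, hmap, Finset.map_eq_image, Finset.map_eq_image,
    ← Finset.image_symmDiff _ _ σ.toEmbedding.injective, ← Finset.map_eq_image, Finset.sum_map]
  simp only [Equiv.coe_toEmbedding, Function.comp_apply, Equiv.symm_apply_apply]

end Relabelling

section RankVectors

lemma IsRankVec.comp_perm {X : Type*} [Fintype X] {R : X → X → Prop} {σ : Equiv.Perm X}
    {v : Fin (Fintype.card X) → X} (hv : IsRankVec (σ ⁻¹'o R) v) : IsRankVec R (σ ∘ v) :=
  ⟨σ.bijective.comp hv.1, hv.2⟩

lemma IsRankVec.eq {X : Type*} [Fintype X] {R : X → X → Prop} {v v' : Fin (Fintype.card X) → X}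
    (hv : IsRankVec R v) (hv' : IsRankVec R v') : v = v' := by
  let e := Equiv.ofBijective v hv.1
  have hmono : StrictMono (e.symm ∘ v') := by
    intro i j hij
    by_contra! hle
    have hasym : asymPart R (v' i) (v' j) := hv'.2 i j hij
    rcases hle.eq_or_lt with heq | hlt
    · exact hij.ne' (hv'.1.injective (e.symm.injective heq))
    · have hrev : asymPart R (e (e.symm (v' j))) (e (e.symm (v' i))) := hv.2 _ _ hlt
      rw [e.apply_symm_apply, e.apply_symm_apply] at hrev
      exact hasym.asymm hrev
  have hid : e.symm ∘ v' = id := by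
    rw [← hmono.range_inj strictMono_id, Set.range_id]
    exact (e.symm.surjective.comp hv'.1.surjective).range_eq
  exact (e.eq_symm_comp id v').1 hid.symm

/-- The weighted Kendall metric `d_ω`, expressed through rank vectors: the least total weight of a
sequence of adjacent transpositions of positions that carries `v` to `v'`. -/
noncomputable def kendallDist {X : Type*} {n : ℕ} (ω : Equiv.Perm (Fin n) → ℝ)
    (v v' : Fin n → X) : ℝ :=
  sInf {c : ℝ | ∃ l : List (Equiv.Perm (Fin n)),
    (∀ σ ∈ l, AdjTrans σ) ∧ (v' = fun i => v (l.prod i)) ∧ c = (l.map ω).sum}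

lemma kendallDist_comp_left {X Y : Type*} {n : ℕ} (ω : Equiv.Perm (Fin n) → ℝ) {f : X → Y}
    (hf : Function.Injective f) (v v' : Fin n → X) :
    kendallDist ω (f ∘ v) (f ∘ v') = kendallDist ω v v' := by
  have hcarry (l : List (Equiv.Perm (Fin n))) :
      (f ∘ v' = fun i => (f ∘ v) (l.prod i)) ↔ v' = fun i => v (l.prod i) :=
    hf.comp_left.eq_iff (b := fun i => v (l.prod i))
  simp only [kendallDist, hcarry]

end RankVectors

section AdjacentPairs

variable {X : Type*} {R : X → X → Prop} {a b : X}

/-- `a` and `b` are `R`-adjacent, `a` directly above `b`: every other alternative compares in the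
same way with both. Exchanging such a pair is an adjacent transposition of the ranking. -/
structure IsAdjacentPair (R : X → X → Prop) (a b : X) : Prop where
  asymPart_left_right : asymPart R a b
  above_iff : ∀ x, x ≠ a → x ≠ b → (asymPart R x a ↔ asymPart R x b)
  below_iff : ∀ x, x ≠ a → x ≠ b → (asymPart R a x ↔ asymPart R b x)

lemma exists_linearOrderRel_isAdjacentPair (hab : a ≠ b) :
    ∃ R : X → X → Prop, LinearOrderRel R ∧ IsAdjacentPair R a b := by
  let abTop : X → X → Prop := fun x y => x = y ∨ x = a ∨ (x = b ∧ y ≠ a)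
  have : IsPartialOrder X abTop :=
    { refl := by grind
      trans := by grind
      antisymm := by grind }
  obtain ⟨R, hR, hle⟩ := extend_partialOrder abTop
  have asymPart_of_abTop {x y : X} (hxy : abTop x y) (hne : x ≠ y) : asymPart R x y :=
    ⟨hle x y hxy, fun hyx => hne (hR.antisymm x y (hle x y hxy) hyx)⟩
  have ha {x : X} (hxa : x ≠ a) : asymPart R a x :=
    asymPart_of_abTop (.inr (.inl rfl)) hxa.symm
  have hb {x : X} (hxa : x ≠ a) (hxb : x ≠ b) : asymPart R b x :=
    asymPart_of_abTop (.inr (.inr ⟨rfl, hxa⟩)) hxb.symm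
  refine ⟨R, ⟨hR.refl, hR.trans, hR.antisymm, hR.total⟩, ha hab.symm, fun x hxa hxb => ?_,
    fun x hxa hxb => iff_of_true (ha hxa) (hb hxa hxb)⟩
  exact iff_of_false (ha hxa).asymm (hb hxa hxb).asymm

variable [DecidableEq X]

lemma card_filter_mem_MaxSet_and_mem [Fintype X] (hab : a ≠ b) (hba : ¬ asymPart R b a) :
    #{S : Finset X | a ∈ MaxSet S R ∧ b ∈ S} = 2 ^ (Nnum R a - 1) := by
  let notAbove : Finset X := {x | ¬ asymPart R x a}
  have hIcc : ({S : Finset X | a ∈ MaxSet S R ∧ b ∈ S} : Finset (Finset X)) =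
      Finset.Icc {a, b} notAbove := by
    ext S
    have hnotAbove : S ⊆ notAbove ↔ ∀ x ∈ S, ¬ asymPart R x a := by
      simp only [notAbove, Finset.subset_iff, Finset.mem_filter_univ]
    rw [Finset.mem_filter_univ, Finset.mem_Icc, hnotAbove, Finset.insert_subset_iff,
      Finset.singleton_subset_iff, mem_MaxSet, and_right_comm]
  have ha : a ∈ notAbove := Finset.mem_filter_univ a |>.2 (asymPart_irrefl R a)
  have hb : b ∈ notAbove := Finset.mem_filter_univ b |>.2 hba
  have hpair : {a, b} ⊆ notAbove :=
    Finset.insert_subset ha (Finset.singleton_subset_iff.2 hb)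
  have hNnum : #notAbove = Nnum R a + 1 := by
    rw [← Finset.card_erase_add_one ha, Nnum]
    congr 2
    grind
  rw [hIcc, Finset.card_Icc_finset hpair, hNnum, Finset.card_pair hab, Nat.add_sub_add_right]

namespace IsAdjacentPair

lemma asymPart_swap_iff (h : IsAdjacentPair R a b) (x y : X) :
    asymPart (Equiv.swap a b ⁻¹'o R) x y ↔
      (asymPart R x y ∧ ¬ (x = a ∧ y = b)) ∨ (x = b ∧ y = a) := by
  obtain ⟨hab, habove, hbelow⟩ := h
  change asymPart R (Equiv.swap a b x) (Equiv.swap a b y) ↔ _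
  grind [asymPart_irrefl, hab.asymm]

lemma symmDiff_MaxSet_swap (h : IsAdjacentPair R a b) (S : Finset X) :
    MaxSet S R ∆ MaxSet S (Equiv.swap a b ⁻¹'o R) =
      if a ∈ MaxSet S R ∧ b ∈ S then {a, b} else ∅ := by
  have hab : asymPart R a b := h.asymPart_left_right
  have hother {x : X} (hxa : x ≠ a) (hxb : x ≠ b) :
      x ∈ MaxSet S (Equiv.swap a b ⁻¹'o R) ↔ x ∈ MaxSet S R := by
    simp only [mem_MaxSet, h.asymPart_swap_iff, hxa, hxb, and_false, not_false_iff, and_true,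
      or_false]
  have ha : a ∈ MaxSet S (Equiv.swap a b ⁻¹'o R) ↔ a ∈ MaxSet S R ∧ b ∉ S := by
    simp only [mem_MaxSet, h.asymPart_swap_iff]
    grind
  have habove (x : X) : asymPart (Equiv.swap a b ⁻¹'o R) x b ↔ asymPart R x a := by
    rw [h.asymPart_swap_iff]
    by_cases hxa : x = a <;> by_cases hxb : x = b <;>
      grind [h.above_iff, asymPart_irrefl, hab.asymm]
  have hb' : b ∈ MaxSet S (Equiv.swap a b ⁻¹'o R) ↔ b ∈ S ∧ ∀ x ∈ S, ¬ asymPart R x a := by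
    simp only [mem_MaxSet, habove]
  have hb : b ∈ MaxSet S R ↔ b ∈ MaxSet S (Equiv.swap a b ⁻¹'o R) ∧ a ∉ S := by
    simp only [mem_MaxSet, h.asymPart_swap_iff]
    grind
  ext x
  rw [Finset.mem_symmDiff]
  by_cases hxa : x = a
  · grind [mem_MaxSet]
  by_cases hxb : x = b
  · grind [mem_MaxSet]
  · grind

lemma Dmu_swap [Fintype X] (h : IsAdjacentPair R a b) (w : X → ℝ) :
    Dmu w R (Equiv.swap a b ⁻¹'o R) = 2 ^ (Nnum R a - 1) * (w a + w b) := by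
  have hab : asymPart R a b := h.asymPart_left_right
  calc Dmu w R (Equiv.swap a b ⁻¹'o R)
      = ∑ S : Finset X, if a ∈ MaxSet S R ∧ b ∈ S then w a + w b else 0 := by
        refine Finset.sum_congr rfl fun S _ => ?_
        rw [h.symmDiff_MaxSet_swap]
        split_ifs
        · exact Finset.sum_pair hab.ne
        · exact Finset.sum_empty
    _ = #{S : Finset X | a ∈ MaxSet S R ∧ b ∈ S} * (w a + w b) := by
        rw [← Finset.sum_filter, Finset.sum_const, nsmul_eq_mul]
    _ = 2 ^ (Nnum R a - 1) * (w a + w b) := by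
        rw [card_filter_mem_MaxSet_and_mem hab.ne hab.asymm, Nat.cast_pow, Nat.cast_ofNat]

end IsAdjacentPair

end AdjacentPairs

theorem stmt_10_general {X : Type*} [Fintype X] [DecidableEq X] (h3 : 3 ≤ Fintype.card X)
    (w : X → ℝ) (hxy : ∃ x y : X, w x ≠ w y)
    (d : (Fin (Fintype.card X) → X) → (Fin (Fintype.card X) → X) → ℝ)
    (hd : ∀ (σ : Equiv.Perm X) v v', d (σ ∘ v) (σ ∘ v') = d v v') :
    ∃ R R' : X → X → Prop, LinearOrderRel R ∧ LinearOrderRel R' ∧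
      ∀ v v' : Fin (Fintype.card X) → X, IsRankVec R v → IsRankVec R' v' →
        d v v' ≠ Dmu w R R' := by
  obtain ⟨x, y, hxy⟩ := hxy
  obtain ⟨z, hzx, hzy⟩ : ∃ z, z ≠ x ∧ z ≠ y :=
    ENat.exists_ne_ne_of_three_le (by simpa using h3) x y
  obtain ⟨R, hR, hzxR⟩ := exists_linearOrderRel_isAdjacentPair hzx
  let R' := Equiv.swap z x ⁻¹'o R
  have hR' : LinearOrderRel R' := hR.preimage (Equiv.swap z x).injective
  let σ := Equiv.swap x y
  by_contra! hcoincide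
  obtain ⟨v, v', hv, hv', hdist⟩ := hcoincide R R' hR hR'
  obtain ⟨u, u', hu, hu', hdistσ⟩ :=
    hcoincide (σ ⁻¹'o R) (σ ⁻¹'o R') (hR.preimage σ.injective) (hR'.preimage σ.injective)
  have hneutral : Dmu w R R' = Dmu (w ∘ σ.symm) R R' := by
    rw [← hdist, hv.eq hu.comp_perm, hv'.eq hu'.comp_perm, hd, hdistσ, Dmu_preimage]
  rw [hzxR.Dmu_swap, hzxR.Dmu_swap] at hneutral
  have hsum : w z + w x = w z + w y := by
    simpa [σ, Equiv.symm_swap, Equiv.swap_apply_of_ne_of_ne hzx hzy] using hneutral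
  exact hxy (add_left_cancel hsum)

/-- Proposition 3.5: if `|X| ≥ 3` and μ is not the "uniform" measure
(`μ{x} ≠ μ{y}` for some `x,y`), then no weighted Kendall metric `d_ω` coincides with
`D^μ` on the set of linear orders. -/
theorem stmt_10 {X : Type*} [Fintype X] [DecidableEq X]
    (h3 : 3 ≤ Fintype.card X)
    (w : X → ℝ) (hw : ∀ x, 0 ≤ w x) (hxy : ∃ x y : X, w x ≠ w y)
    (ω : Equiv.Perm (Fin (Fintype.card X)) → ℝ) (hω : ∀ σ, 0 ≤ ω σ) :
    ∃ R R' : X → X → Prop, LinearOrderRel R ∧ LinearOrderRel R' ∧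
      ∀ v v' : Fin (Fintype.card X) → X, IsRankVec R v → IsRankVec R' v' →
        sInf {c : ℝ | ∃ l : List (Equiv.Perm (Fin (Fintype.card X))),
              (∀ σ ∈ l, AdjTrans σ) ∧ (v' = fun i => v (l.prod i)) ∧
              c = (l.map ω).sum}
          ≠ Dmu w R R' :=
  stmt_10_general h3 w hxy (kendallDist ω) fun σ => kendallDist_comp_left ω σ.injective
end
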